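/- For any tensor $A \in \mathbb{R}^{n_1 \times \cdots \times n_m}$ and any positive integer $r$, the best nuclear rank-$r$ approximation problem $\mathrm{argmin}\{\|A - X\| : \mathrm{rank}_*(X) \le r\}$ always has a solution; that is, the Euclidean distance from $A$ to the set of tensors of nuclear rank at most $r$ is attained. -/

import Mathlib

/-- The simple (product) tensor `x¹ ⊗ ⋯ ⊗ xᵐ` of a family of real vectors, realized as
the array `j ↦ ∏ i, x i (j i)` in `ℝ^{n₁ × ⋯ × n_m}` with its Euclidean norm. -/
noncomputable def rTprod {m : ℕ} {n : Fin m → ℕ} (x : Π i, EuclideanSpace ℝ (Fin (n i))) :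
    EuclideanSpace ℝ (Π i, Fin (n i)) :=
  (WithLp.equiv 2 _).symm fun j => ∏ i, x i (j i)

/-- The nuclear (projective) norm of a real tensor `X ∈ ℝ^{n₁ × ⋯ × n_m}`. -/
noncomputable def nuclearNorm {m : ℕ} {n : Fin m → ℕ}
    (X : EuclideanSpace ℝ (Π i, Fin (n i))) : ℝ :=
  sInf {s | ∃ (r : ℕ) (x : Fin r → Π i, EuclideanSpace ℝ (Fin (n i))),
    X = ∑ k, rTprod (x k) ∧ s = ∑ k, ∏ i, ‖x k i‖}

/-- `X` has nuclear rank at most `r`: some decomposition of `X` into at most `r` rank-one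
terms attains the nuclear norm. -/
noncomputable def nuclearRankLE {m : ℕ} {n : Fin m → ℕ}
    (X : EuclideanSpace ℝ (Π i, Fin (n i))) (r : ℕ) : Prop :=
  ∃ (r' : ℕ), r' ≤ r ∧ ∃ x : Fin r' → Π i, EuclideanSpace ℝ (Fin (n i)),
    X = ∑ k, rTprod (x k) ∧ ∑ k, ∏ i, ‖x k i‖ = nuclearNorm X

section helpers

lemma rT_apply {m : ℕ} {n : Fin m → ℕ} (x : Π i, EuclideanSpace ℝ (Fin (n i)))
    (j : Π i, Fin (n i)) : rTprod x j = ∏ i, x i (j i) := rfl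

lemma nn_bdd {m : ℕ} {n : Fin m → ℕ} (X : EuclideanSpace ℝ (Π i, Fin (n i))) :
    BddBelow {s | ∃ (r : ℕ) (x : Fin r → Π i, EuclideanSpace ℝ (Fin (n i))),
    X = ∑ k, rTprod (x k) ∧ s = ∑ k, ∏ i, ‖x k i‖} := by
  refine ⟨0, ?_⟩
  rintro s ⟨r, x, -, rfl⟩
  positivity

lemma nn_le {m : ℕ} {n : Fin m → ℕ} {κ : Type*} [Fintype κ]
    (X : EuclideanSpace ℝ (Π i, Fin (n i)))
    (x : κ → Π i, EuclideanSpace ℝ (Fin (n i))) (h : X = ∑ k, rTprod (x k)) :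
    nuclearNorm X ≤ ∑ k, ∏ i, ‖x k i‖ := by
  refine csInf_le (nn_bdd X) ⟨Fintype.card κ, fun k => x ((Fintype.equivFin κ).symm k), ?_, ?_⟩
  · rw [h]
    exact ((Fintype.equivFin κ).symm.sum_comp (fun k => rTprod (x k))).symm
  · exact ((Fintype.equivFin κ).symm.sum_comp (fun k => ∏ i, ‖x k i‖)).symm

lemma nn_zero {m : ℕ} {n : Fin m → ℕ} :
    nuclearNorm (0 : EuclideanSpace ℝ (Π i, Fin (n i))) = 0 := by
  apply le_antisymm
  · simpa using nn_le (κ := Fin 0) (0 : EuclideanSpace ℝ (Π i, Fin (n i))) (fun _ _ => 0) (by simp)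
  · apply Real.sInf_nonneg
    rintro s ⟨r, x, -, rfl⟩
    positivity

lemma rT_smul {m : ℕ} {n : Fin m → ℕ} (a : Fin m → ℝ)
    (x : Π i, EuclideanSpace ℝ (Fin (n i))) :
    rTprod (fun i => a i • x i) = (∏ i, a i) • rTprod x := by
  ext j
  simp [rT_apply, Finset.prod_mul_distrib]

/-- scaling only coordinate zero -/
def scal {m : ℕ} (c : ℝ) : Fin (m+1) → ℝ := fun i => if i = 0 then c else 1

lemma scal_prod {m : ℕ} (c : ℝ) : ∏ i, scal (m := m) c i = c := by
  simp [scal]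

lemma scal_norm {m : ℕ} {n : Fin (m+1) → ℕ} {c : ℝ} (hc : 0 ≤ c)
    (x : Π i, EuclideanSpace ℝ (Fin (n i))) :
    ∏ i, ‖scal c i • x i‖ = c * ∏ i, ‖x i‖ := by
  have : ∀ i : Fin (m+1), 0 ≤ scal c i := by
    intro i; unfold scal; split_ifs <;> simp [hc]
  simp_rw [norm_smul, Finset.prod_mul_distrib, Real.norm_of_nonneg (this _), scal_prod]

lemma exists_decomp {m : ℕ} {n : Fin (m+1) → ℕ} (Y : EuclideanSpace ℝ (Π i, Fin (n i))) :
    ∃ x : (Π i, Fin (n i)) → Π i, EuclideanSpace ℝ (Fin (n i)),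
      Y = ∑ k, rTprod (x k) ∧
      ∑ k, ∏ i, ‖x k i‖ ≤ (Fintype.card (Π i, Fin (n i)) : ℝ) * ‖Y‖ := by
  refine ⟨fun k i => scal (Y k) i • EuclideanSpace.single (k i) (1:ℝ), ?_, ?_⟩
  · simp_rw [rT_smul, scal_prod]
    ext j
    have h : ∀ k : (Π i, Fin (n i)),
        rTprod (fun i => EuclideanSpace.single (k i) (1:ℝ)) j = if j = k then 1 else 0 := by
      intro k
      rw [rT_apply]
      split_ifs with hjk
      · subst hjk; simp
      · obtain ⟨i, hi⟩ := Function.ne_iff.mp hjk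
        apply Finset.prod_eq_zero (Finset.mem_univ i)
        simp [hi]
    simp [h]
  · have : ∀ k : (Π i, Fin (n i)),
        ∏ i, ‖scal (Y k) i • EuclideanSpace.single (k i) (1:ℝ)‖ ≤ ‖Y‖ := by
      intro k
      simp_rw [norm_smul, Finset.prod_mul_distrib]
      rw [← norm_prod, scal_prod]
      simpa using PiLp.norm_apply_le Y k
    calc _ ≤ ∑ k : (Π i, Fin (n i)), ‖Y‖ := Finset.sum_le_sum fun k _ => this k
      _ = _ := by simp

lemma nn_add_le {m : ℕ} {n : Fin (m+1) → ℕ} (X Y : EuclideanSpace ℝ (Π i, Fin (n i))) :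
    nuclearNorm X ≤ nuclearNorm Y + (Fintype.card (Π i, Fin (n i)) : ℝ) * ‖X - Y‖ := by
  obtain ⟨y, hy, hyn⟩ := exists_decomp (X - Y)
  rw [← sub_le_iff_le_add]
  apply le_csInf
  · obtain ⟨x, hx, -⟩ := exists_decomp Y
    refine ⟨_, Fintype.card (Π i, Fin (n i)), fun k => x ((Fintype.equivFin _).symm k), ?_, rfl⟩
    nth_rewrite 1 [hx]
    exact ((Fintype.equivFin _).symm.sum_comp (fun k => rTprod (x k))).symm
  · rintro s ⟨r, x, hx, rfl⟩
    have := nn_le X (Sum.elim x y) (by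
      rw [Fintype.sum_sum_type]; simp only [Sum.elim_inl, Sum.elim_inr]; rw [← hx, ← hy]; abel)
    rw [Fintype.sum_sum_type] at this
    simp only [Sum.elim_inl, Sum.elim_inr] at this
    linarith

lemma nn_cont {m : ℕ} {n : Fin (m+1) → ℕ} :
    Continuous (nuclearNorm : EuclideanSpace ℝ (Π i, Fin (n i)) → ℝ) := by
  apply LipschitzWith.continuous (K := (Fintype.card (Π i, Fin (n i)) : NNReal))
  apply LipschitzWith.of_le_add_mul
  intro X Y
  rw [dist_eq_norm]
  simpa using nn_add_le X Y

/-- normalized parametrization -/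
noncomputable def FF {m r : ℕ} {n : Fin m → ℕ}
    (p : (Fin r → ℝ) × (Fin r → Π i, EuclideanSpace ℝ (Fin (n i)))) :
    EuclideanSpace ℝ (Π i, Fin (n i)) := ∑ k, p.1 k • rTprod (p.2 k)

lemma FF_cont {m r : ℕ} {n : Fin m → ℕ} : Continuous (FF (r := r) (n := n)) := by
  have h : Continuous (rTprod (n := n)) := by
    apply (PiLp.continuous_toLp 2 _).comp
    fun_prop
  unfold FF
  fun_prop

lemma rank_of_param {m r : ℕ} {n : Fin (m+1) → ℕ}
    (p : (Fin r → ℝ) × (Fin r → Π i, EuclideanSpace ℝ (Fin (n i))))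
    (h0 : ∀ k, 0 ≤ p.1 k) (h1 : ∀ k i, ‖p.2 k i‖ ≤ 1)
    (h2 : ∑ k, p.1 k ≤ nuclearNorm (FF p)) : nuclearRankLE (FF p) r := by
  have hX : FF p = ∑ k, rTprod (fun i => scal (p.1 k) i • p.2 k i) := by
    simp_rw [rT_smul, scal_prod]; rfl
  refine ⟨r, le_rfl, fun k i => scal (p.1 k) i • p.2 k i, hX, le_antisymm ?_ (nn_le _ _ hX)⟩
  refine le_trans (Finset.sum_le_sum fun k _ => ?_) h2
  rw [scal_norm (h0 k)]
  exact mul_le_of_le_one_right (h0 k)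
    (Finset.prod_le_one (fun i _ => norm_nonneg _) fun i _ => h1 k i)

lemma param_of_rank {m r : ℕ} {n : Fin (m+1) → ℕ} (Y : EuclideanSpace ℝ (Π i, Fin (n i)))
    (hY : nuclearRankLE Y r) :
    ∃ p : (Fin r → ℝ) × (Fin r → Π i, EuclideanSpace ℝ (Fin (n i))),
      (∀ k, 0 ≤ p.1 k) ∧ (∀ k i, ‖p.2 k i‖ ≤ 1) ∧ ∑ k, p.1 k ≤ nuclearNorm (FF p) ∧
      FF p = Y := by
  obtain ⟨r', hr', x, hx, hn⟩ := hY
  obtain ⟨d, rfl⟩ := Nat.exists_eq_add_of_le hr'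
  have hF : FF (r := r' + d) (n := n) (Fin.append (fun k => ∏ i, ‖x k i‖) (fun _ => 0),
      Fin.append (fun k i => ‖x k i‖⁻¹ • x k i) (fun _ _ => 0)) = Y := by
    unfold FF
    rw [Fin.sum_univ_add]
    simp only [Fin.append_left, Fin.append_right, zero_smul, Finset.sum_const_zero, add_zero]
    rw [hx]
    refine Finset.sum_congr rfl fun k _ => ?_
    rw [← rT_smul]
    congr 1
    funext i
    by_cases h : x k i = 0
    · simp [h]
    · rw [smul_smul, mul_inv_cancel₀ (norm_ne_zero_iff.mpr h), one_smul]
  refine ⟨_, ?_, ?_, ?_, hF⟩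
  · intro k
    refine Fin.addCases (fun k => ?_) (fun k => ?_) k
    · simp only [Fin.append_left]; positivity
    · simp
  · intro k i
    refine Fin.addCases (fun k => ?_) (fun k => ?_) k
    · simp only [Fin.append_left, norm_smul, norm_inv, norm_norm]
      exact inv_mul_le_one
    · simp
  · rw [hF, Fin.sum_univ_add]
    simp [hn]

end helpers

/-- The best nuclear rank-`r` approximation problem
`argmin { ‖A - X‖ : rank_*(X) ≤ r }` always has a solution: the Euclidean distance from
`A` to the set of tensors of nuclear rank at most `r` is attained. -/
theorem best_nuclearRank_approximation_exists {m : ℕ} {n : Fin m → ℕ}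
    (A : EuclideanSpace ℝ (Π i, Fin (n i))) (r : ℕ) (hr : 0 < r) :
    ∃ X : EuclideanSpace ℝ (Π i, Fin (n i)), nuclearRankLE X r ∧
      ∀ Y : EuclideanSpace ℝ (Π i, Fin (n i)), nuclearRankLE Y r → ‖A - X‖ ≤ ‖A - Y‖ := by
  cases m with
  | zero =>
    have hfin : {X : EuclideanSpace ℝ (Π i, Fin (n i)) | nuclearRankLE X r}.Finite := by
      apply ((Set.finite_Iic r).image
        (fun k : ℕ => k • rTprod (n := n) (fun i => 0))).subset
      rintro X ⟨r', hr', x, hx, -⟩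
      refine ⟨r', hr', ?_⟩
      have : ∀ k, x k = fun i => 0 := fun k => Subsingleton.elim _ _
      simp [hx, this]
    exact Set.exists_min_image _ (fun X => ‖A - X‖) hfin
      ⟨0, 0, Nat.zero_le _, fun _ _ => 0, by simp, by simp [nn_zero]⟩
  | succ m =>
    set C : ℝ := (Fintype.card (Π i, Fin (n i)) : ℝ) with hC
    let K : Set ((Fin r → ℝ) × (Fin r → Π i, EuclideanSpace ℝ (Fin (n i)))) :=
      {p | (∀ k, 0 ≤ p.1 k) ∧ (∀ k i, ‖p.2 k i‖ ≤ 1) ∧ ∑ k, p.1 k ≤ nuclearNorm (FF p) ∧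
        ‖A - FF p‖ ≤ ‖A‖}
    have hF := FF_cont (r := r) (n := n)
    have hN := (nn_cont (n := n)).comp hF
    have hcl : IsClosed K := by
      refine IsClosed.inter (s₁ := {p | ∀ k, 0 ≤ p.1 k}) ?_
        (IsClosed.inter (s₁ := {p | ∀ k i, ‖p.2 k i‖ ≤ 1}) ?_
        (IsClosed.inter (s₁ := {p | ∑ k, p.1 k ≤ nuclearNorm (FF p)}) ?_ ?_))
      · simp only [Set.ofPred_forall]
        exact isClosed_iInter fun k => isClosed_le (by fun_prop) (by fun_prop)
      · simp only [Set.ofPred_forall]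
        exact isClosed_iInter fun k => isClosed_iInter fun i =>
          isClosed_le (by fun_prop) (by fun_prop)
      · exact isClosed_le (by fun_prop) hN
      · exact isClosed_le (f := fun p => ‖A - FF p‖) (g := fun _ => ‖A‖)
          (continuous_const.sub hF).norm continuous_const
    have hbd : Bornology.IsBounded K := by
      refine (Metric.isBounded_closedBall (x := 0) (r := max 1 (C * (2 * ‖A‖)))).subset ?_
      rintro p ⟨h0, h1, h2, h3⟩
      have hFn : ‖FF p‖ ≤ 2 * ‖A‖ := by
        have := norm_sub_le A (A - FF p)
        rw [sub_sub_cancel] at this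
        linarith
      have hs : ∑ k, p.1 k ≤ C * (2 * ‖A‖) := by
        have := nn_add_le (FF p) 0
        rw [nn_zero, sub_zero, zero_add] at this
        exact (h2.trans this).trans (mul_le_mul_of_nonneg_left hFn (by positivity))
      rw [mem_closedBall_zero_iff, Prod.norm_def]
      apply max_le
      · refine (pi_norm_le_iff_of_nonneg (by positivity)).mpr fun k => ?_
        rw [Real.norm_of_nonneg (h0 k)]
        exact ((Finset.single_le_sum (fun k _ => h0 k) (Finset.mem_univ k)).trans hs).trans
          (le_max_right _ _)
      · refine (pi_norm_le_iff_of_nonneg (by positivity)).mpr fun k => ?_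
        refine (pi_norm_le_iff_of_nonneg (by positivity)).mpr fun i => ?_
        exact (h1 k i).trans (le_max_left _ _)
    have hK : IsCompact K := Metric.isCompact_of_isClosed_isBounded hcl hbd
    have hz : FF (r := r) (n := n) 0 = 0 := by simp [FF]
    have hne : K.Nonempty := ⟨0, by simp, by simp, by simp [hz, nn_zero], by simp [hz]⟩
    obtain ⟨p, hp, hmin⟩ := hK.exists_isMinOn hne
      (f := fun p => ‖A - FF p‖) (by fun_prop)
    refine ⟨FF p, rank_of_param p hp.1 hp.2.1 hp.2.2.1, fun Y hY => ?_⟩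
    obtain ⟨q, h0, h1, h2, rfl⟩ := param_of_rank Y hY
    by_cases h3 : ‖A - FF q‖ ≤ ‖A‖
    · exact hmin ⟨h0, h1, h2, h3⟩
    · exact hp.2.2.2.trans (not_le.mp h3).le
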